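/- Let α ∈ (1,2), ρ ∈ (1−1/α, 1/α), ρ̂ = 1−ρ. Then for every y > 0, ∫_0^∞ (1−e^{−y−z})^{αρ̂−1} e^{−z} (1−e^{−z})^{αρ−1} dz = (1−e^{−y})^{α−1} e^{αρ y} ∫_0^{e^{−y}} t^{αρ−1} (1−t)^{−α} dt, and for every y < 0, ∫_{−y}^∞ (1−e^{−y−z})^{αρ̂−1} e^{−z} (1−e^{−z})^{αρ−1} dz = (1−e^{y})^{α−1} e^{(1−αρ̂)y} ∫_0^{e^{y}} t^{αρ̂−1} (1−t)^{−α} dt. -/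

import Mathlib

open MeasureTheory

/-!
Put `a = αρ` and `b = α(1 - ρ)`. For `y > 0` the substitution `w = e^{-z}` turns the convolution
into `∫₀¹ (1 - w)^(a-1) (1 - cw)^(b-1) dw` with `c = e^{-y}`, an Euler integral for `₂F₁`. Euler's
transformation of `₂F₁`, i.e. the substitution `w ↦ (1 - w)/(1 - cw)`, gives
`(1 - c)^(a+b-1) ∫₀¹ s^(a-1) (1 - cs)^(-(a+b)) ds`, and `t = cs` yields the incomplete beta
integral. The case `y < 0` is the case `-y > 0` with `a` and `b` exchanged: shifting `z` by `y`
swaps the two factors of the convolution.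
-/

section EulerTransformation

/-- The Möbius transformation exchanging `0` and `1`, an involution of the unit interval when
`c < 1`; it is the substitution behind Euler's transformation of `₂F₁(·, ·; ·; c)`. -/
noncomputable def eulerInvolution (c w : ℝ) : ℝ := (1 - w) / (1 - c * w)

variable {c w : ℝ}

theorem one_sub_mul_pos_of_mem_Icc (hc : c < 1) (hw : w ∈ Set.Icc 0 1) : 0 < 1 - c * w := by
  rcases hw.1.eq_or_lt with rfl | hw_pos
  · simp
  · linarith [mul_lt_of_lt_one_left hw_pos hc, hw.2]

theorem one_sub_eulerInvolution (h : 1 - c * w ≠ 0) :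
    1 - eulerInvolution c w = (1 - c) * w / (1 - c * w) := by
  rw [eulerInvolution, eq_div_iff h, sub_mul, div_mul_cancel₀ _ h]
  ring

theorem one_sub_mul_eulerInvolution (h : 1 - c * w ≠ 0) :
    1 - c * eulerInvolution c w = (1 - c) / (1 - c * w) := by
  rw [eulerInvolution, eq_div_iff h, sub_mul, mul_assoc, div_mul_cancel₀ _ h]
  ring

theorem eulerInvolution_eulerInvolution (hc : c ≠ 1) (h : 1 - c * w ≠ 0) :
    eulerInvolution c (eulerInvolution c w) = w := by
  have hc' : 1 - c ≠ 0 := sub_ne_zero.mpr hc.symm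
  rw [eulerInvolution, one_sub_eulerInvolution h, one_sub_mul_eulerInvolution h,
    div_div_div_cancel_right₀ h, mul_div_cancel_left₀ _ hc']

theorem mapsTo_eulerInvolution (hc : c < 1) :
    Set.MapsTo (eulerInvolution c) (Set.Ioo 0 1) (Set.Ioo 0 1) := by
  intro w hw
  have hD := one_sub_mul_pos_of_mem_Icc hc (Set.Ioo_subset_Icc_self hw)
  refine ⟨div_pos (sub_pos.mpr hw.2) hD, sub_pos.mp ?_⟩
  rw [one_sub_eulerInvolution hD.ne']
  exact div_pos (mul_pos (sub_pos.mpr hc) hw.1) hD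

theorem bijOn_eulerInvolution (hc : c < 1) :
    Set.BijOn (eulerInvolution c) (Set.Ioo 0 1) (Set.Ioo 0 1) := by
  have involutiveOn : Set.LeftInvOn (eulerInvolution c) (eulerInvolution c) (Set.Ioo 0 1) :=
    fun w hw => eulerInvolution_eulerInvolution hc.ne
      (one_sub_mul_pos_of_mem_Icc hc (Set.Ioo_subset_Icc_self hw)).ne'
  exact Set.InvOn.bijOn ⟨involutiveOn, involutiveOn⟩ (mapsTo_eulerInvolution hc)
    (mapsTo_eulerInvolution hc)

theorem hasDerivAt_eulerInvolution (h : 1 - c * w ≠ 0) :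
    HasDerivAt (eulerInvolution c) (-((1 - c) / (1 - c * w) ^ 2)) w := by
  have h_num : HasDerivAt (fun w : ℝ => 1 - w) (-1) w := (hasDerivAt_id' w).const_sub 1
  have h_den : HasDerivAt (fun w : ℝ => 1 - c * w) (-c) w := by
    simpa using ((hasDerivAt_id' w).const_mul c).const_sub 1
  refine (h_num.div h_den h).congr_deriv ?_
  rw [← neg_div]
  congr 1
  ring

theorem integral_comp_eulerInvolution {E : Type*} [NormedAddCommGroup E] [NormedSpace ℝ E]
    (hc : c < 1) (f : ℝ → E) :
    ∫ w in (0:ℝ)..1, ((1 - c) / (1 - c * w) ^ 2) • f (eulerInvolution c w) =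
      ∫ w in (0:ℝ)..1, f w := by
  have hD : ∀ w ∈ Set.Ioo (0:ℝ) 1, 0 < 1 - c * w := fun w hw =>
    one_sub_mul_pos_of_mem_Icc hc (Set.Ioo_subset_Icc_self hw)
  simp only [intervalIntegral.integral_of_le zero_le_one, integral_Ioc_eq_integral_Ioo]
  conv_rhs => rw [← (bijOn_eulerInvolution hc).image_eq]
  rw [integral_image_eq_integral_abs_deriv_smul measurableSet_Ioo
    (fun w hw => (hasDerivAt_eulerInvolution (hD w hw).ne').hasDerivWithinAt)
    (bijOn_eulerInvolution hc).injOn]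
  refine setIntegral_congr_fun measurableSet_Ioo fun w _ => ?_
  simp only [abs_neg, abs_of_nonneg (div_nonneg (sub_pos.mpr hc).le (sq_nonneg (1 - c * w)))]

theorem eulerIntegrand_eulerInvolution (hc : c < 1) (hw : w ∈ Set.Ioo 0 1) (p q r : ℝ) :
    (1 - c) / (1 - c * w) ^ 2 * (eulerInvolution c w ^ p * (1 - eulerInvolution c w) ^ q *
        (1 - c * eulerInvolution c w) ^ r) =
      (1 - c) ^ (q + r + 1) * (w ^ q * (1 - w) ^ p * (1 - c * w) ^ (-(p + q + r + 2))) := by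
  have hD := one_sub_mul_pos_of_mem_Icc hc (Set.Ioo_subset_Icc_self hw)
  have hw' : 0 < 1 - w := sub_pos.mpr hw.2
  have hc' : 0 < 1 - c := sub_pos.mpr hc
  have hD_rpow : (1 - c * w) ^ (p + q + r + 2) =
      (1 - c * w) ^ p * (1 - c * w) ^ q * (1 - c * w) ^ r * (1 - c * w) ^ 2 := by
    rw [Real.rpow_add hD, Real.rpow_add hD, Real.rpow_add hD, Real.rpow_two]
  rw [one_sub_eulerInvolution hD.ne', one_sub_mul_eulerInvolution hD.ne', eulerInvolution,
    Real.div_rpow hw'.le hD.le, Real.div_rpow (mul_pos hc' hw.1).le hD.le,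
    Real.mul_rpow hc'.le hw.1.le, Real.div_rpow hc'.le hD.le, Real.rpow_neg hD.le, hD_rpow,
    Real.rpow_add_one hc'.ne', Real.rpow_add hc']
  field_simp

theorem integral_euler_transformation (hc : c < 1) (p q r : ℝ) :
    ∫ w in (0:ℝ)..1, w ^ p * (1 - w) ^ q * (1 - c * w) ^ r =
      (1 - c) ^ (q + r + 1) *
        ∫ w in (0:ℝ)..1, w ^ q * (1 - w) ^ p * (1 - c * w) ^ (-(p + q + r + 2)) := by
  rw [← integral_comp_eulerInvolution hc, ← intervalIntegral.integral_const_mul]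
  simp only [intervalIntegral.integral_of_le zero_le_one, integral_Ioc_eq_integral_Ioo]
  exact setIntegral_congr_fun measurableSet_Ioo fun w hw =>
    eulerIntegrand_eulerInvolution hc hw p q r

theorem integral_rpow_mul_one_sub_mul_rpow (hc : 0 < c) (p r : ℝ) :
    ∫ s in (0:ℝ)..1, s ^ p * (1 - c * s) ^ r =
      c ^ (-(p + 1)) * ∫ t in (0:ℝ)..c, t ^ p * (1 - t) ^ r := by
  have rescale := intervalIntegral.integral_comp_mul_left (a := 0) (b := 1)
    (fun t : ℝ => t ^ p * (1 - t) ^ r) hc.ne'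
  rw [mul_zero, mul_one, smul_eq_mul] at rescale
  rw [neg_add, Real.rpow_add hc, Real.rpow_neg_one, mul_assoc, ← rescale,
    ← intervalIntegral.integral_const_mul]
  refine intervalIntegral.integral_congr fun s hs => ?_
  have hs₀ : 0 ≤ s := (Set.uIcc_of_le (zero_le_one' ℝ) ▸ hs).1
  simp only [Real.mul_rpow hc.le hs₀, Real.rpow_neg hc.le]
  field_simp

theorem integral_one_sub_rpow_mul_one_sub_mul_rpow (hc₀ : 0 < c) (hc₁ : c < 1) (a b : ℝ) :
    ∫ w in (0:ℝ)..1, (1 - w) ^ (a - 1) * (1 - c * w) ^ (b - 1) =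
      (1 - c) ^ (a + b - 1) * c ^ (-a) *
        ∫ t in (0:ℝ)..c, t ^ (a - 1) * (1 - t) ^ (-(a + b)) := by
  have euler := integral_euler_transformation hc₁ 0 (a - 1) (b - 1)
  simp only [Real.rpow_zero, one_mul, mul_one] at euler
  rw [euler, integral_rpow_mul_one_sub_mul_rpow hc₀, sub_add_cancel, mul_assoc,
    show a - 1 + (b - 1) + 1 = a + b - 1 by ring,
    show -(0 + (a - 1) + (b - 1) + 2) = -(a + b) by ring]

theorem intervalIntegrable_one_sub_rpow_mul_one_sub_mul_rpow (hc : c < 1) {p : ℝ} (hp : -1 < p)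
    (r : ℝ) :
    IntervalIntegrable (fun w : ℝ => (1 - w) ^ p * (1 - c * w) ^ r) volume 0 1 := by
  have h_singular : IntervalIntegrable (fun w : ℝ => (1 - w) ^ p) volume 0 1 := by
    simpa using
      (intervalIntegral.intervalIntegrable_rpow' (a := 1) (b := 0) hp).comp_sub_left 1
  refine h_singular.mul_continuousOn (ContinuousOn.rpow_const (by fun_prop) fun w hw => Or.inl ?_)
  rw [Set.uIcc_of_le zero_le_one] at hw
  exact (one_sub_mul_pos_of_mem_Icc hc hw).ne'

end EulerTransformation

section ExpNegSubstitution

variable {E : Type*} [NormedAddCommGroup E] [NormedSpace ℝ E] (g : ℝ → E) (y : ℝ)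

theorem image_exp_neg_Ioi :
    (fun z : ℝ => Real.exp (-z)) '' Set.Ioi y = Set.Ioo 0 (Real.exp (-y)) := by
  rw [← Set.image_image Real.exp, Set.image_neg_Ioi, Real.image_exp_Iio]

theorem hasDerivAt_exp_neg (z : ℝ) :
    HasDerivAt (fun z : ℝ => Real.exp (-z)) (-Real.exp (-z)) z := by
  simpa using (hasDerivAt_neg z).exp

theorem antitone_exp_neg : Antitone fun z : ℝ => Real.exp (-z) :=
  Real.exp_monotone.comp_antitone fun _ _ => neg_le_neg

theorem integral_comp_exp_neg_Ioi :
    ∫ z in Set.Ioi y, Real.exp (-z) • g (Real.exp (-z)) =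
      ∫ w in (0:ℝ)..Real.exp (-y), g w := by
  rw [intervalIntegral.integral_of_le (Real.exp_pos _).le, integral_Ioc_eq_integral_Ioo,
    ← image_exp_neg_Ioi, integral_image_eq_integral_deriv_smul_of_antitoneOn measurableSet_Ioi
      (fun z _ => (hasDerivAt_exp_neg z).hasDerivWithinAt) (antitone_exp_neg.antitoneOn _)]
  simp only [neg_neg]

theorem integrableOn_comp_exp_neg_Ioi :
    IntegrableOn (fun z => Real.exp (-z) • g (Real.exp (-z))) (Set.Ioi y) ↔
      IntervalIntegrable g volume 0 (Real.exp (-y)) := by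
  rw [intervalIntegrable_iff_integrableOn_Ioo_of_le (Real.exp_pos _).le, ← image_exp_neg_Ioi,
    integrableOn_image_iff_integrableOn_deriv_smul_of_antitoneOn measurableSet_Ioi
      (fun z _ => (hasDerivAt_exp_neg z).hasDerivWithinAt) (antitone_exp_neg.antitoneOn _)]
  simp only [neg_neg]

end ExpNegSubstitution

section RenewalConvolution

/-- The integrand `v(y + z) v̂(z)` of the convolution of the ascending renewal density
`v(z) = (1 - e^{-z})^(b-1)` with the descending one `v̂(z) = e^{-z} (1 - e^{-z})^(a-1)`, without
the normalising factors `1/Γ(b)` and `1/Γ(a)`; in the paper `a = αρ` and `b = αρ̂`. -/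
noncomputable def renewalConvolutionIntegrand (a b y z : ℝ) : ℝ :=
  (1 - Real.exp (-y - z)) ^ (b - 1) * Real.exp (-z) * (1 - Real.exp (-z)) ^ (a - 1)

theorem renewalConvolutionIntegrand_eq_exp_neg_mul (a b y z : ℝ) :
    renewalConvolutionIntegrand a b y z = Real.exp (-z) *
      ((1 - Real.exp (-z)) ^ (a - 1) * (1 - Real.exp (-y) * Real.exp (-z)) ^ (b - 1)) := by
  rw [renewalConvolutionIntegrand, sub_eq_add_neg (-y), Real.exp_add]
  ring

theorem integrableOn_renewalConvolutionIntegrand_iff (a b y : ℝ) :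
    IntegrableOn (renewalConvolutionIntegrand a b y) (Set.Ioi 0) ↔
      IntervalIntegrable
        (fun w : ℝ => (1 - w) ^ (a - 1) * (1 - Real.exp (-y) * w) ^ (b - 1)) volume 0 1 := by
  simpa [← renewalConvolutionIntegrand_eq_exp_neg_mul] using integrableOn_comp_exp_neg_Ioi
    (fun w : ℝ => (1 - w) ^ (a - 1) * (1 - Real.exp (-y) * w) ^ (b - 1)) 0

theorem integral_renewalConvolutionIntegrand (a b y : ℝ) :
    ∫ z in Set.Ioi 0, renewalConvolutionIntegrand a b y z =
      ∫ w in (0:ℝ)..1, (1 - w) ^ (a - 1) * (1 - Real.exp (-y) * w) ^ (b - 1) := by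
  simpa [← renewalConvolutionIntegrand_eq_exp_neg_mul] using integral_comp_exp_neg_Ioi
    (fun w : ℝ => (1 - w) ^ (a - 1) * (1 - Real.exp (-y) * w) ^ (b - 1)) 0

theorem renewalConvolutionIntegrand_sub (a b y z : ℝ) :
    renewalConvolutionIntegrand a b y (z - y) =
      Real.exp y * renewalConvolutionIntegrand b a (-y) z := by
  have h_exp : Real.exp (-(z - y)) = Real.exp y * Real.exp (-z) := by
    rw [← Real.exp_add]
    ring_nf
  rw [renewalConvolutionIntegrand, renewalConvolutionIntegrand, neg_neg, sub_eq_add_neg y z,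
    Real.exp_add, h_exp, show -y - (z - y) = -z by ring]
  ring

variable {a b y : ℝ}

theorem integrableOn_renewalConvolutionIntegrand_of_pos (ha : 0 < a) (b : ℝ) (hy : 0 < y) :
    IntegrableOn (renewalConvolutionIntegrand a b y) (Set.Ioi 0) := by
  rw [integrableOn_renewalConvolutionIntegrand_iff]
  exact intervalIntegrable_one_sub_rpow_mul_one_sub_mul_rpow
    (Real.exp_lt_one_iff.mpr (neg_lt_zero.mpr hy)) (by linarith) _

theorem integral_renewalConvolutionIntegrand_of_pos (a b : ℝ) (hy : 0 < y) :
    ∫ z in Set.Ioi 0, renewalConvolutionIntegrand a b y z =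
      (1 - Real.exp (-y)) ^ (a + b - 1) * Real.exp (a * y) *
        ∫ t in (0:ℝ)..Real.exp (-y), t ^ (a - 1) * (1 - t) ^ (-(a + b)) := by
  rw [integral_renewalConvolutionIntegrand,
    integral_one_sub_rpow_mul_one_sub_mul_rpow (Real.exp_pos _)
      (Real.exp_lt_one_iff.mpr (neg_lt_zero.mpr hy)),
    ← Real.exp_mul, neg_mul_neg, mul_comm y a]

theorem integrableOn_renewalConvolutionIntegrand_of_neg (a : ℝ) (hb : 0 < b) (hy : y < 0) :
    IntegrableOn (renewalConvolutionIntegrand a b y) (Set.Ioi (-y)) := by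
  rw [← (measurePreserving_sub_right volume y).integrableOn_comp_preimage
    (measurableEmbedding_subRight y), Set.preimage_sub_const_Ioi, neg_add_cancel]
  simp only [Function.comp_def, renewalConvolutionIntegrand_sub]
  exact (integrableOn_renewalConvolutionIntegrand_of_pos hb a (neg_pos.mpr hy)).const_mul _

theorem integral_renewalConvolutionIntegrand_of_neg (a b : ℝ) (hy : y < 0) :
    ∫ z in Set.Ioi (-y), renewalConvolutionIntegrand a b y z =
      (1 - Real.exp y) ^ (a + b - 1) * Real.exp ((1 - b) * y) *
        ∫ t in (0:ℝ)..Real.exp y, t ^ (b - 1) * (1 - t) ^ (-(a + b)) := by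
  have h_exp : Real.exp ((1 - b) * y) = Real.exp y * Real.exp (b * -y) := by
    rw [← Real.exp_add]
    ring_nf
  rw [← (measurePreserving_sub_right volume y).setIntegral_preimage_emb
    (measurableEmbedding_subRight y), Set.preimage_sub_const_Ioi, neg_add_cancel]
  simp only [renewalConvolutionIntegrand_sub]
  rw [integral_const_mul, integral_renewalConvolutionIntegrand_of_pos b a (neg_pos.mpr hy),
    neg_neg, add_comm b a, h_exp]
  ring

end RenewalConvolution

theorem conditioned_process_potential_density_general
    {α ρ : ℝ} (hα : 0 < α) (hρ : ρ ∈ Set.Ioo (0 : ℝ) 1) :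
    (∀ y : ℝ, 0 < y →
      IntegrableOn (renewalConvolutionIntegrand (α * ρ) (α * (1 - ρ)) y) (Set.Ioi 0) ∧
      ∫ z in Set.Ioi (0:ℝ), renewalConvolutionIntegrand (α * ρ) (α * (1 - ρ)) y z =
        (1 - Real.exp (-y)) ^ (α - 1) * Real.exp (α * ρ * y) *
          ∫ t in (0:ℝ)..(Real.exp (-y)), t ^ (α * ρ - 1) * (1 - t) ^ (-α)) ∧
    (∀ y : ℝ, y < 0 →
      IntegrableOn (renewalConvolutionIntegrand (α * ρ) (α * (1 - ρ)) y) (Set.Ioi (-y)) ∧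
      ∫ z in Set.Ioi (-y), renewalConvolutionIntegrand (α * ρ) (α * (1 - ρ)) y z =
        (1 - Real.exp y) ^ (α - 1) * Real.exp ((1 - α * (1 - ρ)) * y) *
          ∫ t in (0:ℝ)..(Real.exp y), t ^ (α * (1 - ρ) - 1) * (1 - t) ^ (-α)) := by
  have h_add : α * ρ + α * (1 - ρ) = α := by ring
  have ha : 0 < α * ρ := mul_pos hα hρ.1
  have hb : 0 < α * (1 - ρ) := mul_pos hα (sub_pos.mpr hρ.2)
  refine ⟨fun y hy => ⟨integrableOn_renewalConvolutionIntegrand_of_pos ha _ hy, ?_⟩,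
    fun y hy => ⟨integrableOn_renewalConvolutionIntegrand_of_neg _ hb hy, ?_⟩⟩
  · rw [integral_renewalConvolutionIntegrand_of_pos _ _ hy, h_add]
  · rw [integral_renewalConvolutionIntegrand_of_neg _ _ hy, h_add]

theorem conditioned_process_potential_density
    (α ρ : ℝ) (hα : α ∈ Set.Ioo (1:ℝ) 2) (hρ : ρ ∈ Set.Ioo (1 - 1/α) (1/α)) :
    (∀ y : ℝ, 0 < y →
      ∫ z in Set.Ioi (0:ℝ),
          (1 - Real.exp (-y - z)) ^ (α * (1 - ρ) - 1) * Real.exp (-z) *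
            (1 - Real.exp (-z)) ^ (α * ρ - 1) =
        (1 - Real.exp (-y)) ^ (α - 1) * Real.exp (α * ρ * y) *
          ∫ t in (0:ℝ)..(Real.exp (-y)), t ^ (α * ρ - 1) * (1 - t) ^ (-α)) ∧
    (∀ y : ℝ, y < 0 →
      ∫ z in Set.Ioi (-y),
          (1 - Real.exp (-y - z)) ^ (α * (1 - ρ) - 1) * Real.exp (-z) *
            (1 - Real.exp (-z)) ^ (α * ρ - 1) =
        (1 - Real.exp y) ^ (α - 1) * Real.exp ((1 - α * (1 - ρ)) * y) *
          ∫ t in (0:ℝ)..(Real.exp y), t ^ (α * (1 - ρ) - 1) * (1 - t) ^ (-α)) := by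
  have hα₀ : 0 < α := one_pos.trans hα.1
  have hρ₀₁ : ρ ∈ Set.Ioo (0:ℝ) 1 :=
    Set.Ioo_subset_Ioo (sub_nonneg.mpr ((div_le_one hα₀).mpr hα.1.le))
      ((div_le_one hα₀).mpr hα.1.le) hρ
  have h := conditioned_process_potential_density_general hα₀ hρ₀₁
  exact ⟨fun y hy => (h.1 y hy).2, fun y hy => (h.2 y hy).2⟩
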